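/- Fix an integer m ≥ 1 and define D_m(y) = e^y − ∑_{k=0}^{m-1} y^k/k! = ∑_{n≥m} y^n/n!. Then for every y > 0 the quantity y·D_m'(y)/D_m(y) is strictly greater than m−1 and is strictly increasing in y. Equivalently, e(y) := (m−1) − y D_m'(y)/D_m(y) is strictly negative and strictly decreasing on (0,∞). -/

import Mathlib

/-!
Write `D m` for `Dm m` and `R m y = y * D m' y / D m y`. Since `D (m+1)' = D m`, the numerator
`N y = y * D (m+1)' y = y * D m y` of `R (m+1)` satisfies `N' = D m * (1 + R m)`, so that
`N' / D (m+1)' = 1 + R m`. Both `N` and `D (m+1)` vanish at `0`, hence Cauchy's mean value theorem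
gives `R (m+1) x = 1 + R m c` for some `0 < c < x` (`Dm_ratio_eq`).

The lower bound `R m > m - 1` and strict monotonicity then follow by induction on `m`, starting from
`R 0 y = y`. For monotonicity (a monotone l'Hôpital rule), the derivative of `R (m+1) = N / D (m+1)`
at `x` equals `(D m x / D (m+1) x) * ((1 + R m x) - R (m+1) x)`, which is
`(D m x / D (m+1) x) * (R m x - R m c)`, and this is positive when `R m` is strictly increasing.
-/

open Real Set

/-- `Dm m y = e^y - ∑_{k<m} y^k/k! = ∑_{n≥m} y^n/n!`. -/
noncomputable def Dm (m : ℕ) (y : ℝ) : ℝ :=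
  Real.exp y - ∑ k ∈ Finset.range m, y ^ k / (Nat.factorial k)

lemma Dm_zero : Dm 0 = Real.exp := by
  funext y
  simp [Dm]

lemma Dm_succ_apply_zero (m : ℕ) : Dm (m + 1) 0 = 0 := by
  simp [Dm, Finset.sum_range_succ']

lemma Dm_succ_hasDerivAt (m : ℕ) (y : ℝ) : HasDerivAt (Dm (m + 1)) (Dm m y) y := by
  induction m with
  | zero =>
    have h : Dm (0 + 1) = fun y => Real.exp y - 1 := by
      funext y
      simp [Dm]
    rw [h, Dm_zero]
    exact (Real.hasDerivAt_exp y).sub_const 1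
  | succ m ih =>
    have h : Dm (m + 1 + 1) = fun y => Dm (m + 1) y - y ^ (m + 1) / (m + 1).factorial := by
      funext y
      simp only [Dm]
      rw [Finset.sum_range_succ _ (m + 1)]
      ring
    rw [h]
    refine (ih.sub ((hasDerivAt_pow (m + 1) y).div_const _)).congr_deriv ?_
    have hm : (m.factorial : ℝ) ≠ 0 := by positivity
    have hm' : (m : ℝ) + 1 ≠ 0 := by positivity
    simp only [Dm, Finset.sum_range_succ, Nat.factorial_succ]
    push_cast
    field_simp
    ring

lemma Dm_differentiable (m : ℕ) : Differentiable ℝ (Dm m) := by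
  cases m with
  | zero => rw [Dm_zero]; exact Real.differentiable_exp
  | succ m => exact fun y => (Dm_succ_hasDerivAt m y).differentiableAt

lemma Dm_pos (m : ℕ) : ∀ y : ℝ, 0 < y → 0 < Dm m y := by
  induction m with
  | zero => intro y _; rw [Dm_zero]; exact Real.exp_pos y
  | succ m ih =>
    intro y hy
    obtain ⟨c, hc, h⟩ := exists_hasDerivAt_eq_slope (Dm (m + 1)) (Dm m) hy
      (Dm_differentiable _).continuous.continuousOn (fun x _ => Dm_succ_hasDerivAt m x)
    rw [Dm_succ_apply_zero, sub_zero, sub_zero] at h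
    have := ih c hc.1
    rw [h] at this
    exact (div_pos_iff_of_pos_right hy).1 this

lemma deriv_Dm_succ (m : ℕ) : deriv (Dm (m + 1)) = Dm m :=
  funext fun y => (Dm_succ_hasDerivAt m y).deriv

lemma hasDerivAt_mul_Dm (m : ℕ) (y : ℝ) :
    HasDerivAt (fun t => t * Dm m t) (Dm m y + y * deriv (Dm m) y) y := by
  exact ((hasDerivAt_id' y).mul (Dm_differentiable m y).hasDerivAt).congr_deriv (by rw [one_mul])

/-- Cauchy's mean value theorem for the quotient of `t * Dm m t` by `Dm (m + 1) t` on `[0, x]`: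
both functions vanish at `0`, and the quotient of their derivatives is one plus the logarithmic
derivative ratio at level `m`. -/
lemma Dm_ratio_eq (m : ℕ) {x : ℝ} (hx : 0 < x) : ∃ c ∈ Ioo 0 x,
    x * deriv (Dm (m + 1)) x / Dm (m + 1) x = 1 + c * deriv (Dm m) c / Dm m c := by
  obtain ⟨c, hc, h⟩ := exists_ratio_hasDerivAt_eq_ratio_slope
    (fun t => t * Dm m t) (fun t => Dm m t + t * deriv (Dm m) t) hx
    (fun t _ => (hasDerivAt_mul_Dm m t).continuousAt.continuousWithinAt)
    (fun t _ => hasDerivAt_mul_Dm m t)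
    (Dm (m + 1)) (Dm m) (Dm_differentiable _).continuous.continuousOn
    (fun t _ => Dm_succ_hasDerivAt m t)
  refine ⟨c, hc, ?_⟩
  have h1 := (Dm_pos m c hc.1).ne'
  have h2 := (Dm_pos (m + 1) x hx).ne'
  simp only [Dm_succ_apply_zero, sub_zero, zero_mul] at h
  rw [deriv_Dm_succ]
  field_simp
  linarith

lemma Dm_ratio_gt (m : ℕ) :
    ∀ y : ℝ, 0 < y → ((m : ℝ) - 1) < y * deriv (Dm m) y / Dm m y := by
  induction m with
  | zero =>
    intro y hy
    rw [Dm_zero, Real.deriv_exp, mul_div_cancel_right₀ _ (Real.exp_pos y).ne']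
    push_cast
    linarith
  | succ m ih =>
    intro y hy
    obtain ⟨c, hc, h⟩ := Dm_ratio_eq m hy
    have := ih c hc.1
    rw [h]
    push_cast
    linarith

lemma Dm_ratio_strictMonoOn (m : ℕ) :
    StrictMonoOn (fun y => y * deriv (Dm m) y / Dm m y) (Ioi (0 : ℝ)) := by
  induction m with
  | zero =>
    intro x _ y _ hxy
    simpa [Dm_zero, (Real.exp_pos _).ne'] using hxy
  | succ m ih =>
    have hd : ∀ x ∈ Ioi (0 : ℝ), HasDerivAt (fun y => y * deriv (Dm (m + 1)) y / Dm (m + 1) y)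
        (((Dm m x + x * deriv (Dm m) x) * Dm (m + 1) x - x * Dm m x * Dm m x)
          / Dm (m + 1) x ^ 2) x := by
      intro x hx
      rw [deriv_Dm_succ]
      exact (hasDerivAt_mul_Dm m x).div (Dm_succ_hasDerivAt m x) (Dm_pos _ x hx).ne'
    refine strictMonoOn_of_deriv_pos (convex_Ioi 0)
      (fun x hx => (hd x hx).continuousAt.continuousWithinAt) fun x hx => ?_
    rw [interior_Ioi] at hx
    rw [(hd x hx).deriv]
    obtain ⟨c, hc, h⟩ := Dm_ratio_eq m hx
    have hlt : c * deriv (Dm m) c / Dm m c < x * deriv (Dm m) x / Dm m x := ih hc.1 hx hc.2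
    have h1 := Dm_pos m x hx
    have h2 := Dm_pos (m + 1) x hx
    have h3 : x * Dm m x / Dm (m + 1) x < 1 + x * deriv (Dm m) x / Dm m x := by
      rw [deriv_Dm_succ] at h
      linarith
    have h4 : 1 + x * deriv (Dm m) x / Dm m x = (Dm m x + x * deriv (Dm m) x) / Dm m x := by
      field_simp
    rw [h4, div_lt_div_iff₀ h2 h1] at h3
    exact div_pos (sub_pos.2 h3) (by positivity)

/-- for `m ≥ 1`, the function `y ↦ y·Dm'(y)/Dm(y)` is `> m-1`
and strictly increasing on `(0,∞)`; equivalently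
`e(y) = (m-1) - y Dm'(y)/Dm(y)` is strictly negative and strictly decreasing. -/
theorem Dm_log_derivative_mono (m : ℕ) (hm : 1 ≤ m) :
    (∀ y : ℝ, 0 < y → ((m : ℝ) - 1) < y * deriv (Dm m) y / Dm m y) ∧
    StrictMonoOn (fun y => y * deriv (Dm m) y / Dm m y) (Set.Ioi (0:ℝ)) ∧
    (∀ y : ℝ, 0 < y → ((m : ℝ) - 1) - y * deriv (Dm m) y / Dm m y < 0) ∧
    StrictAntiOn (fun y => ((m : ℝ) - 1) - y * deriv (Dm m) y / Dm m y)
      (Set.Ioi (0:ℝ)) := by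
  have hmono := Dm_ratio_strictMonoOn m
  refine ⟨Dm_ratio_gt m, hmono, fun y hy => sub_neg.2 (Dm_ratio_gt m y hy), ?_⟩
  intro x hx y hy hxy
  exact sub_lt_sub_left (hmono hx hy hxy) _
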